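/- For weak compositions a and b of length n, the product of monomial slide polynomials expands as 𝔐_a · 𝔐_b = Σ_c [c | a ⧻ b] 𝔐_c, where [c | a ⧻ b] is the multiplicity of the weak composition c in the quasi-slide product a ⧻ b. -/

import Mathlib

open scoped Classical

namespace SlidePaper

/-- Sum of the first `i` entries of a weak composition of length `n`. -/
def psum {n : ℕ} (a : Fin n → ℕ) (i : ℕ) : ℕ :=
  ∑ j ∈ Finset.univ.filter (fun j : Fin n => (j : ℕ) < i), a j

/-- `b` dominates `a`: all partial sums of `b` are at least those of `a`. -/
def Dominates {n : ℕ} (b a : Fin n → ℕ) : Prop :=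
  ∀ i : Fin (n + 1), psum a i ≤ psum b i

/-- The flattening of a weak composition: the list of its nonzero entries in order. -/
def flat {n : ℕ} (a : Fin n → ℕ) : List ℕ :=
  (List.ofFn a).filter (fun x => x ≠ 0)

/-- `β` refines `α`: `β` splits into consecutive blocks with sums `α₁, α₂, …`. -/
def Refines (β α : List ℕ) : Prop :=
  ∃ L : List (List ℕ), L.flatten = β ∧ L.map List.sum = α

/-- All weak compositions of length `n` with entries at most `k`. -/
def wcFinset (n k : ℕ) : Finset (Fin n → ℕ) :=
  Fintype.piFinset fun _ => Finset.range (k + 1)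

/-- The monomial slide polynomial `𝔐_a`. -/
noncomputable def slideM {n : ℕ} (a : Fin n → ℕ) : MvPolynomial (Fin n) ℤ :=
  ∑ b ∈ (wcFinset n (∑ i, a i)).filter (fun b => Dominates b a ∧ flat b = flat a),
    MvPolynomial.monomial (Finsupp.equivFunOnFinite.symm b) 1

/-- The fundamental slide polynomial `𝔉_a`. -/
noncomputable def slideF {n : ℕ} (a : Fin n → ℕ) : MvPolynomial (Fin n) ℤ :=
  ∑ b ∈ (wcFinset n (∑ i, a i)).filter (fun b => Dominates b a ∧ Refines (flat b) (flat a)),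
    MvPolynomial.monomial (Finsupp.equivFunOnFinite.symm b) 1

/-- A weak composition is quasi-flat if its nonzero entries occupy consecutive positions. -/
def QuasiFlat {n : ℕ} (a : Fin n → ℕ) : Prop :=
  ∀ i j l : Fin n, i ≤ j → j ≤ l → a i ≠ 0 → a l ≠ 0 → a j ≠ 0

/-- `b` strongly dominates `a`. -/
def StronglyDominates {n : ℕ} (b a : Fin n → ℕ) : Prop :=
  Dominates b a ∧ ∀ c : Fin n → ℕ, Dominates c a → flat c = flat b → Dominates c b

/-- The exponent vector placing the parts of `α` at the positions `i`. -/
noncomputable def placeExp {n : ℕ} (α : List ℕ) (i : Fin α.length → Fin n) : Fin n →₀ ℕ :=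
  ∑ t : Fin α.length, Finsupp.single (i t) (α.get t)

/-- `f` is quasisymmetric in the variables `x_1, …, x_k` (0-indexed: `x_0, …, x_{k-1}`). -/
def IsQuasisymmetricIn {n : ℕ} (k : ℕ) (f : MvPolynomial (Fin n) ℤ) : Prop :=
  ∀ α : List ℕ, (∀ x ∈ α, 0 < x) →
    ∀ i j : Fin α.length → Fin n, StrictMono i → StrictMono j →
      (∀ t, (i t : ℕ) < k) → (∀ t, (j t : ℕ) < k) →
      MvPolynomial.coeff (placeExp α i) f = MvPolynomial.coeff (placeExp α j) f

/-- The monomial quasisymmetric polynomial `M_α(x_1, …, x_k)` inside `ℤ[x_1, …, x_n]`. -/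
noncomputable def Mqs (n k : ℕ) (α : List ℕ) : MvPolynomial (Fin n) ℤ :=
  ∑ i ∈ (Finset.univ : Finset (Fin α.length → Fin n)).filter
      (fun i : Fin α.length → Fin n => StrictMono i ∧ ∀ t, (i t : ℕ) < k),
    ∏ t : Fin α.length, (MvPolynomial.X (i t) : MvPolynomial (Fin n) ℤ) ^ α.get t

/-- The fundamental quasisymmetric polynomial `F_α(x_1, …, x_k)` inside `ℤ[x_1, …, x_n]`. -/
noncomputable def Fqs (n k : ℕ) (α : List ℕ) : MvPolynomial (Fin n) ℤ :=
  ∑ c ∈ (Finset.univ : Finset (Composition α.sum)).filter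
      (fun c => Refines c.blocks α ∧ c.blocks.length ≤ k),
    Mqs n k c.blocks

/-- Place the weak composition `a` (of length `N`) at offset `k` inside length `M`. -/
def shiftComp {N : ℕ} (k M : ℕ) (a : Fin N → ℕ) : Fin M → ℕ :=
  fun i => if h : k ≤ (i : ℕ) ∧ (i : ℕ) - k < N then a ⟨(i : ℕ) - k, h.2⟩ else 0

/-- Spread the values `g` to positions `ι` inside a weak composition of length `n`. -/
def spread {l n : ℕ} (ι : Fin l → Fin n) (g : Fin l → ℕ) : Fin n → ℕ :=
  fun i => ∑ k, if ι k = i then g k else 0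

/-- The monomial quasisymmetric function `M_α` in infinitely many variables. -/
noncomputable def MqsFun (α : List ℕ) : MvPowerSeries ℕ ℤ :=
  fun d => if ∃ i : Fin α.length → ℕ, StrictMono i ∧
      d = ∑ t : Fin α.length, Finsupp.single (i t) (α.get t) then 1 else 0

/-- The fundamental quasisymmetric function `F_α` in infinitely many variables. -/
noncomputable def FqsFun (α : List ℕ) : MvPowerSeries ℕ ℤ :=
  ∑ c ∈ (Finset.univ : Finset (Composition α.sum)).filter (fun c => Refines c.blocks α),
    MqsFun c.blocks

/-- The cells of the Young diagram of `lam` (French notation): row `r` (from the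
bottom, 0-indexed) has `lam.get r` cells. -/
abbrev Cells (lam : List ℕ) := Σ r : Fin lam.length, Fin (lam.get r)

/-- A filling of `lam` with entries in `{1, …, n}` (encoded as `Fin n`) is a semistandard
Young tableau: rows weakly increase left to right, columns strictly increase bottom to top. -/
def IsSSYT {n : ℕ} {lam : List ℕ} (T : Cells lam → Fin n) : Prop :=
  (∀ (r : Fin lam.length) (c c' : Fin (lam.get r)), c ≤ c' → T ⟨r, c⟩ ≤ T ⟨r, c'⟩) ∧
  (∀ (r r' : Fin lam.length) (c' : Fin (lam.get r')) (h : (c' : ℕ) < lam.get r),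
      (r : ℕ) < (r' : ℕ) → T ⟨r, ⟨c', h⟩⟩ < T ⟨r', c'⟩)

/-- The weight of a filling: the `v`-th entry counts the occurrences of the value `v`. -/
def wtT {n : ℕ} {lam : List ℕ} (T : Cells lam → Fin n) : Fin n → ℕ :=
  fun v => (Finset.univ.filter (fun x : Cells lam => T x = v)).card

/-- A filling is quasi-Yamanouchi if for every value `v > 1`, the leftmost occurrence of `v`
lies weakly left of some occurrence of `v - 1`. -/
def IsQY {n : ℕ} {lam : List ℕ} (T : Cells lam → Fin n) : Prop :=
  ∀ (v : Fin n) (x : Cells lam), T x = v → 0 < (v : ℕ) →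
    (∀ y : Cells lam, T y = v → (x.2 : ℕ) ≤ (y.2 : ℕ)) →
    ∃ z : Cells lam, (T z : ℕ) + 1 = (v : ℕ) ∧ (x.2 : ℕ) ≤ (z.2 : ℕ)

/-- The Schur polynomial `s_lam(x_1, …, x_n)` as the generating function of
semistandard Young tableaux. -/
noncomputable def schurPoly (n : ℕ) (lam : List ℕ) : MvPolynomial (Fin n) ℤ :=
  ∑ T ∈ (Finset.univ : Finset (Cells lam → Fin n)).filter (fun T => IsSSYT T),
    MvPolynomial.monomial (Finsupp.equivFunOnFinite.symm (wtT T)) 1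

/-- One destandardization step on fillings: for some value `v` occurring in `T` whose
leftmost occurrence is strictly right of every occurrence of `v - 1`, every `v` is
decremented to `v - 1`. -/
def TabStep {n : ℕ} {lam : List ℕ} (T T' : Cells lam → Fin n) : Prop :=
  ∃ v : Fin n, 0 < (v : ℕ) ∧ (∃ x, T x = v) ∧
    (∀ x y : Cells lam, T x = v → (T y : ℕ) + 1 = (v : ℕ) → (y.2 : ℕ) < (x.2 : ℕ)) ∧
    ∀ x : Cells lam, (T' x : ℕ) = if T x = v then (v : ℕ) - 1 else (T x : ℕ)

/-- The reading word of a set of crosses: rows are read from top to bottom, each row from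
left to right, the cross in (0-indexed) row `i` and column `j` recording the letter `i + j`
(representing the simple transposition swapping `i + j` and `i + j + 1` of `{0, 1, 2, …}`). -/
def readWord (P : Finset (ℕ × ℕ)) : List ℕ :=
  ((List.range (P.sup Prod.fst + 1)).reverse).flatMap
    (fun i => ((List.range (P.sup Prod.snd + 1)).filter (fun j => decide ((i, j) ∈ P))).map
      (fun j => i + j))

/-- The permutation `s_{i_ℓ} ⋯ s_{i_1}` associated to the word `(i_1, …, i_ℓ)`,
where `s_k` swaps `k` and `k + 1`. -/
def wordPerm (l : List ℕ) : Equiv.Perm ℕ :=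
  ((l.map (fun k => Equiv.swap k (k + 1))).reverse).prod

/-- A word is reduced if no shorter word has the same product. -/
def IsReducedWord (l : List ℕ) : Prop :=
  ∀ l' : List ℕ, wordPerm l' = wordPerm l → l.length ≤ l'.length

/-- `P` is a reduced pipe dream of shape `w`: the pipes trace out `w` and no two pipes
cross more than once, equivalently the reading word of `P` is a reduced word for `w`. -/
def IsPD (w : Equiv.Perm ℕ) (P : Finset (ℕ × ℕ)) : Prop :=
  wordPerm (readWord P) = w ∧ IsReducedWord (readWord P)

/-- `P` is a quasi-Yamanouchi pipe dream of shape `w`: for every row, the westernmost cross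
is in the first column or lies weakly west of some cross in the row above. -/
def IsQPD (w : Equiv.Perm ℕ) (P : Finset (ℕ × ℕ)) : Prop :=
  IsPD w P ∧ ∀ i j : ℕ, (i, j) ∈ P → (∀ j', (i, j') ∈ P → j ≤ j') →
    (j = 0 ∨ ∃ j', (i + 1, j') ∈ P ∧ j ≤ j')

/-- One destandardization step on pipe dreams: a row with no cross in the first column,
all of whose crosses lie strictly east of every cross in the row above, has all its
crosses moved one step northwest. -/
def PDStep (P P' : Finset (ℕ × ℕ)) : Prop :=
  ∃ r : ℕ, (∃ j, (r, j) ∈ P) ∧ (r, 0) ∉ P ∧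
    (∀ j j', (r, j) ∈ P → (r + 1, j') ∈ P → j' < j) ∧
    P' = P.filter (fun p => p.1 ≠ r) ∪
      (P.filter (fun p => p.1 = r)).image (fun p => (r + 1, p.2 - 1))

/-- The number of crosses of `P` in (0-indexed) row `i`. -/
def rowWt (P : Finset (ℕ × ℕ)) (i : ℕ) : ℕ := (P.filter (fun p => p.1 = i)).card

/-- The weight of a pipe dream, as a weak composition of length `n`. -/
def wtFin (n : ℕ) (P : Finset (ℕ × ℕ)) : Fin n → ℕ := fun i => rowWt P (i : ℕ)

/-- The flattened weight of a pipe dream: the list of nonzero row counts, bottom row first. -/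
def flatWt (P : Finset (ℕ × ℕ)) : List ℕ :=
  ((List.range (P.sup Prod.fst + 1)).map (rowWt P)).filter (fun x => x ≠ 0)

/-- The Schubert polynomial of `w` in the variables `x_1, …, x_n`, as the generating
function of reduced pipe dreams of shape `w`. -/
noncomputable def SchubertPoly (n : ℕ) (w : Equiv.Perm ℕ) : MvPolynomial (Fin n) ℤ :=
  ∑ᶠ P ∈ {P : Finset (ℕ × ℕ) | IsPD w P},
    MvPolynomial.monomial (Finsupp.equivFunOnFinite.symm (wtFin n P)) 1

/-- The Lehmer code of `w` (0-indexed): `lehmer w i` counts `j > i` with `w j < w i`. -/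
noncomputable def lehmer (w : Equiv.Perm ℕ) (i : ℕ) : ℕ :=
  Set.ncard {j : ℕ | i < j ∧ w j < w i}

/-- The Lehmer code of `w` as a weak composition of length `n`. -/
noncomputable def lehmerFin (n : ℕ) (w : Equiv.Perm ℕ) : Fin n → ℕ :=
  fun i => lehmer w (i : ℕ)

/-- The number of inversions of `w`. -/
noncomputable def invCount (w : Equiv.Perm ℕ) : ℕ :=
  Set.ncard {p : ℕ × ℕ | p.1 < p.2 ∧ w p.2 < w p.1}

/-- The largest entry of the Lehmer code of `w`. -/
noncomputable def maxLehmer (w : Equiv.Perm ℕ) : ℕ :=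
  sSup (Set.range (lehmer w))

/-- The (0-indexed) position of the first descent of `w`. -/
noncomputable def firstDescent (w : Equiv.Perm ℕ) : ℕ :=
  sInf {i : ℕ | w (i + 1) < w i}

/-- `δ(w) = 1` if every position attaining `max(L(w))` is at or before the first descent,
and `δ(w) = 0` otherwise. -/
noncomputable def delta (w : Equiv.Perm ℕ) : ℤ :=
  if ∀ i : ℕ, lehmer w i = maxLehmer w → i ≤ firstDescent w then 1 else 0

/-- `η(w) = inv(w) − max(L(w)) + δ(w) − min{i : w_i > w_{i+1}}`. -/
noncomputable def eta (w : Equiv.Perm ℕ) : ℤ :=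
  (invCount w : ℤ) - (maxLehmer w : ℤ) + delta w - ((firstDescent w : ℤ) + 1)

/-- The decomposition of a list into maximal strictly increasing runs. -/
def runsStrict : List ℕ → List (List ℕ)
  | [] => []
  | x :: rest =>
    match runsStrict rest, rest with
    | r :: rs, y :: _ => if x < y then (x :: r) :: rs else [x] :: r :: rs
    | _, _ => [[x]]

/-- The descent composition of a word: lengths of its maximal increasing runs, a new run
beginning whenever a letter is followed by a weakly smaller letter. -/
def desStrict (l : List ℕ) : List ℕ := (runsStrict l).map List.length

/-- The decomposition of a list into maximal weakly increasing runs. -/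
def runsWeak : List ℕ → List (List ℕ)
  | [] => []
  | x :: rest =>
    match runsWeak rest, rest with
    | r :: rs, y :: _ => if x ≤ y then (x :: r) :: rs else [x] :: r :: rs
    | _, _ => [[x]]

/-- The descent composition of a word: the lengths of its maximal weakly increasing runs. -/
def desComp (l : List ℕ) : List ℕ := (runsWeak l).map List.length

/-- The permutation `1^m × w`, fixing `0, …, m-1` and acting by `w` shifted by `m` above. -/
def shiftPerm (m : ℕ) (w : Equiv.Perm ℕ) : Equiv.Perm ℕ where
  toFun i := if i < m then i else w (i - m) + m
  invFun i := if i < m then i else w.symm (i - m) + m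
  left_inv i := by
    dsimp only
    by_cases h : i < m
    · simp [h]
    · have h2 : ¬ (w (i - m) + m < m) := by omega
      rw [if_neg h, if_neg h2, Nat.add_sub_cancel, Equiv.symm_apply_apply]
      omega
  right_inv i := by
    dsimp only
    by_cases h : i < m
    · simp [h]
    · have h2 : ¬ (w.symm (i - m) + m < m) := by omega
      rw [if_neg h, if_neg h2, Nat.add_sub_cancel, Equiv.apply_symm_apply]
      omega

/-- The quasi-shuffle product of two (strong) compositions, as a multiset of compositions. -/
def qShuffle : List ℕ → List ℕ → Multiset (List ℕ)
  | [], β => {β}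
  | α, [] => {α}
  | a :: α, b :: β =>
      ((qShuffle α (b :: β)).map (a :: ·)) + ((qShuffle (a :: α) β).map (b :: ·)) +
        ((qShuffle α β).map ((a + b) :: ·))
termination_by α β => α.length + β.length
decreasing_by all_goals (simp only [List.length_cons]; omega)

def shuffles : List ℕ → List ℕ → Multiset (List ℕ)
  | [], B => {B}
  | A, [] => {A}
  | x :: A, y :: B =>
      ((shuffles A (y :: B)).map (x :: ·)) + ((shuffles (x :: A) B).map (y :: ·))
termination_by A B => A.length + B.length
decreasing_by all_goals (simp only [List.length_cons]; omega)

/-- The word `(2n-1)^{a_1} (2n-3)^{a_2} ⋯ 1^{a_n}` associated to a weak composition `a`. -/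
def wordA {n : ℕ} (a : Fin n → ℕ) : List ℕ :=
  (List.ofFn (fun i : Fin n => List.replicate (a i) (2 * n - 2 * (i : ℕ) - 1))).flatten

/-- The word `(2n)^{b_1} (2n-2)^{b_2} ⋯ 2^{b_n}` associated to a weak composition `b`. -/
def wordB {n : ℕ} (b : Fin n → ℕ) : List ℕ :=
  (List.ofFn (fun i : Fin n => List.replicate (b i) (2 * n - 2 * (i : ℕ)))).flatten

/-- A list (padded with trailing zeros) dominates a weak composition of length `n`. -/
def DominatesList {n : ℕ} (l : List ℕ) (a : Fin n → ℕ) : Prop :=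
  ∀ i : Fin (n + 1), psum a (i : ℕ) ≤ ((l.take (i : ℕ)).sum)

/-- The number of letters of the `A`-word (the odd letters) in the `k`-th weakly
increasing run of `C`. -/
def runCountA (C : List ℕ) (k : Fin (runsWeak C).length) : ℕ :=
  (((runsWeak C).get k).filter (fun z => z % 2 = 1)).length

/-- The number of letters of the `B`-word (the even letters) in the `k`-th weakly
increasing run of `C`. -/
def runCountB (C : List ℕ) (k : Fin (runsWeak C).length) : ℕ :=
  (((runsWeak C).get k).filter (fun z => z % 2 = 0)).length

/-- The length of the `k`-th weakly increasing run of `C`. -/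
def runLen (C : List ℕ) (k : Fin (runsWeak C).length) : ℕ :=
  ((runsWeak C).get k).length

/-- `c = bump_{(a,b)}(C)`: the unique weak composition of length `n` obtained by inserting
zero parts into `Des(C)` so that the correspondingly placed `Des_A` and `Des_B` dominate
`a` and `b`, minimal in dominance order among all such insertions. -/
def IsBumpS {n : ℕ} (a b : Fin n → ℕ) (C : List ℕ) (c : Fin n → ℕ) : Prop :=
  ∃ ι : Fin (runsWeak C).length → Fin n, StrictMono ι ∧
    c = spread ι (runLen C) ∧
    Dominates (spread ι (runCountA C)) a ∧ Dominates (spread ι (runCountB C)) b ∧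
    ∀ ι' : Fin (runsWeak C).length → Fin n, StrictMono ι' →
      Dominates (spread ι' (runCountA C)) a → Dominates (spread ι' (runCountB C)) b →
      Dominates (spread ι' (runLen C)) c

/-- The multiplicity `[c ∣ a ⧢ b]` of `c` in the slide product of `a` and `b`: the number of
shuffles `C` of the words of `a` and `b` lying in the shuffle set `SS(a,b)` with
`bump_{(a,b)}(C) = c`. -/
noncomputable def slideMult {n : ℕ} (a b c : Fin n → ℕ) : ℕ :=
  Multiset.card ((shuffles (wordA a) (wordB b)).filter
    (fun C => DominatesList ((runsWeak C).map
        (fun r => (r.filter (fun z => z % 2 = 1)).length)) a ∧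
      DominatesList ((runsWeak C).map (fun r => (r.filter (fun z => z % 2 = 0)).length)) b ∧
      IsBumpS a b C c))

/-- Membership in the quasi-shuffle set `QSS(a,b)`: a pair `(γ_a, γ_b)` of weak compositions
of a common length at most `n` with `γ_a ≥ a`, `flat(γ_a) = flat(a)`, `γ_b ≥ b`,
`flat(γ_b) = flat(b)` (after padding with trailing zeros), and all entries of
`γ_a + γ_b` positive. -/
def InQSS {n : ℕ} (a b : Fin n → ℕ) (x : (l : ℕ) × (Fin l → ℕ) × (Fin l → ℕ)) : Prop :=
  x.1 ≤ n ∧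
  Dominates (shiftComp 0 n x.2.1) a ∧ flat x.2.1 = flat a ∧
  Dominates (shiftComp 0 n x.2.2) b ∧ flat x.2.2 = flat b ∧
  ∀ k : Fin x.1, 0 < x.2.1 k + x.2.2 k

/-- `c = bump_{(a,b)}(γ_a, γ_b)`: the unique weak composition `c` of length `n` with
`flat(c) = γ_a + γ_b` whose decomposition `c = c_a + c_b` satisfies `c_a ≥ a` and
`c_b ≥ b`, minimal in dominance order among all such compositions. -/
def IsBumpQ {n : ℕ} (a b : Fin n → ℕ) (x : (l : ℕ) × (Fin l → ℕ) × (Fin l → ℕ))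
    (c : Fin n → ℕ) : Prop :=
  ∃ ι : Fin x.1 → Fin n, StrictMono ι ∧
    c = spread ι (fun k => x.2.1 k + x.2.2 k) ∧
    Dominates (spread ι x.2.1) a ∧ Dominates (spread ι x.2.2) b ∧
    ∀ ι' : Fin x.1 → Fin n, StrictMono ι' →
      Dominates (spread ι' x.2.1) a → Dominates (spread ι' x.2.2) b →
      Dominates (spread ι' (fun k => x.2.1 k + x.2.2 k)) c

/-- The multiplicity `[c ∣ a ⧻ b]` of `c` in the quasi-slide product of `a` and `b`: the
number of pairs in the quasi-shuffle set `QSS(a,b)` whose bump is `c`. -/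
noncomputable def qsMult {n : ℕ} (a b c : Fin n → ℕ) : ℕ :=
  Nat.card {x : (l : ℕ) × (Fin l → ℕ) × (Fin l → ℕ) // InQSS a b x ∧ IsBumpQ a b x c}

/-- The Stanley symmetric function `S_w`. -/
noncomputable def StanleySym (w : Equiv.Perm ℕ) : MvPowerSeries ℕ ℤ :=
  ∑ᶠ l ∈ {l : List ℕ | wordPerm l = w ∧ IsReducedWord l}, FqsFun (desStrict l)

/-!
A pair of terms of `𝔐_a` and `𝔐_b` is the same as a quasi-shuffle of `a` and `b` (delete the
positions where both exponents vanish) together with a strictly increasing map recording the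
surviving positions. For a fixed quasi-shuffle `(γ_a, γ_b)`, the admissible position maps form a
finite set closed under pointwise suprema: an initial segment of the indices for `ι ⊔ ι'` is the
intersection of those for `ι` and `ι'`, which are nested, so the partial sums for `ι ⊔ ι'` are the
minima of those for `ι` and `ι'`. Hence there is a greatest admissible map; it realises the bump
`c`. Moving positions to the left only increases partial sums, so the admissible maps are exactly
those below the greatest one, and the products they contribute are exactly the terms of `𝔐_c`.
-/

lemma finsum_card_fiber_nsmul {α β M : Type*} [Finite α] [AddCommMonoid M] (B : α → β)
    (f : β → M) : ∑ᶠ c, Nat.card {x // B x = c} • f c = ∑ᶠ x, f (B x) := by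
  have := Fintype.ofFinite α
  rw [finsum_eq_sum_of_support_subset (s := Finset.univ.image B), finsum_eq_sum_of_fintype,
    Finset.sum_comp]
  · simp only [Nat.card_eq_fintype_card, Fintype.card_subtype]
  · intro c hc
    by_contra hB
    have : IsEmpty {x // B x = c} := ⟨fun x => hB (by simpa using ⟨x.1, x.2⟩)⟩
    exact hc (by simp only [Nat.card_of_isEmpty, zero_nsmul])

section ExtendByZero

variable {α M : Type*} [Zero M]

lemma exists_strictMono_extend_zero_eq [LinearOrder α] {f : α → M}
    (hf : (Function.support f).Finite) :
    ∃ (l : ℕ) (ι : Fin l → α) (g : Fin l → M),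
      StrictMono ι ∧ (∀ k, g k ≠ 0) ∧ Function.extend ι g 0 = f := by
  let s := hf.toFinset
  let ι := s.orderEmbOfFin rfl
  have mem_range (i : α) : i ∈ Set.range ι ↔ f i ≠ 0 := by
    simp [ι, s.range_orderEmbOfFin, s]
  refine ⟨s.card, ι, f ∘ ι, ι.strictMono, fun k => (mem_range _).1 ⟨k, rfl⟩, funext fun i => ?_⟩
  by_cases hi : i ∈ Set.range ι
  · obtain ⟨k, rfl⟩ := hi
    exact ι.injective.extend_apply _ _ k
  · rw [Function.extend_apply' _ _ _ hi, Pi.zero_apply, not_not.1 (mt (mem_range i).2 hi)]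

lemma strictMono_extend_zero_inj [PartialOrder α] {l l' : ℕ} {ι : Fin l → α} {ι' : Fin l' → α}
    (hι : StrictMono ι) (hι' : StrictMono ι') {g : Fin l → M} {g' : Fin l' → M}
    (hg : ∀ k, g k ≠ 0) (hg' : ∀ k, g' k ≠ 0)
    (h : Function.extend ι g 0 = Function.extend ι' g' 0) :
    (⟨l, ι, g⟩ : (l : ℕ) × (Fin l → α) × (Fin l → M)) = ⟨l', ι', g'⟩ := by
  have hrange : Set.range ι = Set.range ι' := by
    have := congrArg Function.support h
    rwa [Function.support_extend_zero hι.injective, Function.support_extend_zero hι'.injective,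
      Function.support_eq_univ hg, Function.support_eq_univ hg', Set.image_univ,
      Set.image_univ] at this
  obtain rfl : l = l' := by
    simpa [Set.ncard_range_of_injective, hι.injective, hι'.injective] using
      congrArg Set.ncard hrange
  obtain rfl := (hι.range_inj hι').1 hrange
  obtain rfl : g = g' := Function.extend_injective hι.injective _ h
  rfl

end ExtendByZero

section Spread

variable {l n : ℕ} {ι : Fin l → Fin n}

lemma spread_eq_extend (hι : Function.Injective ι) (g : Fin l → ℕ) :
    spread ι g = Function.extend ι g 0 := by
  funext i
  by_cases hi : i ∈ Set.range ι
  · obtain ⟨k, rfl⟩ := hi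
    simp [spread, hι.extend_apply, hι.eq_iff]
  · rw [Function.extend_apply' _ _ _ hi]
    exact Finset.sum_eq_zero fun k _ => if_neg fun h => hi ⟨k, h⟩

lemma spread_apply (hι : Function.Injective ι) (g : Fin l → ℕ) (k : Fin l) :
    spread ι g (ι k) = g k := by
  rw [spread_eq_extend hι, hι.extend_apply]

lemma support_spread (hι : Function.Injective ι) (g : Fin l → ℕ) :
    Function.support (spread ι g) = ι '' Function.support g := by
  rw [spread_eq_extend hι, Function.support_extend_zero hι]

lemma spread_add (ι : Fin l → Fin n) (g h : Fin l → ℕ) :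
    spread ι (fun k => g k + h k) = spread ι g + spread ι h := by
  funext i
  simp only [spread, Pi.add_apply, ← Finset.sum_add_distrib, ← ite_add_zero]

lemma prodMk_spread_eq_extend (hι : Function.Injective ι) (g h : Fin l → ℕ) :
    (fun i => (spread ι g i, spread ι h i)) = Function.extend ι (fun k => (g k, h k)) 0 := by
  funext i
  rw [spread_eq_extend hι, spread_eq_extend hι]
  exact Prod.ext (Function.apply_extend Prod.fst (g := fun k => (g k, h k)) ι 0 i).symm
    (Function.apply_extend Prod.snd (g := fun k => (g k, h k)) ι 0 i).symm

lemma prodMk_ne_zero_iff {x y : ℕ} : (x, y) ≠ 0 ↔ 0 < x + y := by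
  rw [ne_eq, Prod.mk_eq_zero, ← add_eq_zero, Nat.pos_iff_ne_zero]

lemma exists_spread_pair_eq (c d : Fin n → ℕ) :
    ∃ (l : ℕ) (ι : Fin l → Fin n) (g h : Fin l → ℕ),
      StrictMono ι ∧ (∀ k, 0 < g k + h k) ∧ spread ι g = c ∧ spread ι h = d := by
  obtain ⟨l, ι, f, hι, hf, hext⟩ :=
    exists_strictMono_extend_zero_eq (f := fun i => (c i, d i)) (Set.toFinite _)
  replace hext := (prodMk_spread_eq_extend hι.injective (Prod.fst ∘ f) (Prod.snd ∘ f)).trans hext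
  exact ⟨l, ι, Prod.fst ∘ f, Prod.snd ∘ f, hι, fun k => prodMk_ne_zero_iff.1 (hf k),
    funext fun i => congrArg Prod.fst (congrFun hext i),
    funext fun i => congrArg Prod.snd (congrFun hext i)⟩

lemma spread_pair_inj {l' : ℕ} {ι' : Fin l' → Fin n} (hι : StrictMono ι) (hι' : StrictMono ι')
    {g h : Fin l → ℕ} {g' h' : Fin l' → ℕ} (hpos : ∀ k, 0 < g k + h k)
    (hpos' : ∀ k, 0 < g' k + h' k) (hg : spread ι g = spread ι' g')
    (hh : spread ι h = spread ι' h') :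
    (⟨⟨l, g, h⟩, ι⟩ : (x : (l : ℕ) × (Fin l → ℕ) × (Fin l → ℕ)) × (Fin x.1 → Fin n)) =
      ⟨⟨l', g', h'⟩, ι'⟩ := by
  have hext : Function.extend ι (fun k => (g k, h k)) 0 =
      Function.extend ι' (fun k => (g' k, h' k)) 0 := by
    rw [← prodMk_spread_eq_extend hι.injective, ← prodMk_spread_eq_extend hι'.injective, hg, hh]
  obtain ⟨rfl, heq⟩ := Sigma.mk.inj_iff.1 (strictMono_extend_zero_inj hι hι'
    (fun k => prodMk_ne_zero_iff.2 (hpos k)) (fun k => prodMk_ne_zero_iff.2 (hpos' k)) hext)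
  obtain ⟨rfl, hgh⟩ := Prod.mk.inj (eq_of_heq heq)
  obtain rfl : g = g' := funext fun k => congrArg Prod.fst (congrFun hgh k)
  obtain rfl : h = h' := funext fun k => congrArg Prod.snd (congrFun hgh k)
  rfl

end Spread

section Dominance

variable {l n : ℕ} {ι ι' : Fin l → Fin n} {g : Fin l → ℕ} {a b c : Fin n → ℕ}

lemma Dominates.trans (hcb : Dominates c b) (hba : Dominates b a) : Dominates c a :=
  fun i => (hba i).trans (hcb i)

lemma psum_spread (ι : Fin l → Fin n) (g : Fin l → ℕ) (i : ℕ) :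
    psum (spread ι g) i = ∑ k with (ι k : ℕ) < i, g k := by
  simp only [psum, spread, Finset.sum_comm (t := Finset.univ), Finset.sum_ite_eq,
    Finset.mem_filter_univ, Finset.sum_filter]

lemma dominates_spread_of_le (h : ι ≤ ι') (g : Fin l → ℕ) :
    Dominates (spread ι g) (spread ι' g) := fun i => by
  rw [psum_spread, psum_spread]
  exact Finset.sum_le_sum_of_subset (Finset.monotone_filter_right _ fun k _ =>
    (Fin.val_le_of_le (h k)).trans_lt)

lemma dominates_spread_iff (hι : StrictMono ι) (hι' : StrictMono ι') (hg : ∀ k, 0 < g k) :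
    Dominates (spread ι g) (spread ι' g) ↔ ι ≤ ι' := by
  refine ⟨fun h k => ?_, fun h => dominates_spread_of_le h g⟩
  by_contra! hk
  refine (h (ι' k).succ).not_gt ?_
  rw [psum_spread, psum_spread]
  refine Finset.sum_lt_sum_of_subset (i := k) (fun j hj => ?_) ?_ ?_ (hg k)
    fun _ _ _ => Nat.zero_le _
  · simp only [Finset.mem_filter_univ, Fin.val_succ, Nat.lt_succ_iff, Fin.val_fin_le] at hj ⊢
    exact hι'.monotone (hι.lt_iff_lt.1 (hj.trans_lt hk)).le
  · simp
  · simpa using hk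

lemma psum_spread_sup (hι : Monotone ι) (hι' : Monotone ι') (g : Fin l → ℕ) (i : ℕ) :
    psum (spread (ι ⊔ ι') g) i = min (psum (spread ι g) i) (psum (spread ι' g) i) := by
  let initial (κ : Fin l → Fin n) : Finset (Fin l) := {k | (κ k : ℕ) < i}
  have isLowerSet_initial {κ : Fin l → Fin n} (hκ : Monotone κ) :
      IsLowerSet (initial κ : Set (Fin l)) := fun j k hkj hj => by
    simp only [initial, Finset.coe_filter_univ, Set.mem_ofPred_eq] at hj ⊢
    exact (Fin.val_le_of_le (hκ hkj)).trans_lt hj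
  have initial_sup : initial (ι ⊔ ι') = initial ι ∩ initial ι' := by
    ext k
    simp [initial]
  have sum_le {s t : Finset (Fin l)} (h : s ⊆ t) : ∑ k ∈ s, g k ≤ ∑ k ∈ t, g k :=
    Finset.sum_le_sum_of_subset h
  simp only [psum_spread]
  change ∑ k ∈ initial (ι ⊔ ι'), g k = min (∑ k ∈ initial ι, g k) (∑ k ∈ initial ι', g k)
  rw [initial_sup]
  rcases (isLowerSet_initial hι).total (isLowerSet_initial hι') with h | h
  · rw [Finset.inter_eq_left.2 (mod_cast h), min_eq_left (sum_le (mod_cast h))]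
  · rw [Finset.inter_eq_right.2 (mod_cast h), min_eq_right (sum_le (mod_cast h))]

lemma castLE_le_of_strictMono (h : l ≤ n) (hι : StrictMono ι) : Fin.castLE h ≤ ι := fun k => by
  simpa [Fin.le_def] using Finset.card_le_card_of_injOn ι
    (fun j hj => by simpa using hι (Finset.mem_Iio.1 hj)) hι.injective.injOn
    (s := Finset.Iio k) (t := Finset.Iio (ι k))

end Dominance

section Flat

variable {l m n : ℕ} {ι : Fin l → Fin n}

lemma flat_eq_map (a : Fin n → ℕ) :
    flat a = ((List.finRange n).filter (fun i => a i ≠ 0)).map a := by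
  rw [flat, List.ofFn_eq_map, List.filter_map]
  rfl

lemma flat_spread (hι : StrictMono ι) (g : Fin l → ℕ) : flat (spread ι g) = flat g := by
  have filter_eq : (List.finRange n).filter (fun i => spread ι g i ≠ 0) =
      ((List.finRange l).filter (fun k => g k ≠ 0)).map ι := by
    refine List.Pairwise.eq_of_mem_iff (r := (· < ·))
      ((List.pairwise_lt_finRange n).filter _)
      (List.Pairwise.map ι (fun _ _ h => hι h) ((List.pairwise_lt_finRange l).filter _))
      fun i => ?_
    simpa using Set.ext_iff.1 (support_spread hι.injective g) i
  rw [flat_eq_map, flat_eq_map g, filter_eq, List.map_map]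
  exact List.map_congr_left fun k _ => spread_apply hι.injective g k

lemma flat_eq_ofFn {g : Fin l → ℕ} (hg : ∀ k, g k ≠ 0) : flat g = List.ofFn g := by
  simpa [flat, List.filter_eq_self, List.forall_mem_ofFn_iff] using hg

lemma flat_eq_flat_iff_exists_spread {g : Fin l → ℕ} (hg : ∀ k, g k ≠ 0) {d : Fin n → ℕ} :
    flat d = flat g ↔ ∃ ι : Fin l → Fin n, StrictMono ι ∧ spread ι g = d := by
  refine ⟨fun h => ?_, fun ⟨ι, hι, hd⟩ => hd ▸ flat_spread hι g⟩
  obtain ⟨l', ι, g', hι, hg', rfl⟩ := exists_strictMono_extend_zero_eq (f := d) (Set.toFinite _)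
  rw [← spread_eq_extend hι.injective] at h ⊢
  rw [flat_spread hι, flat_eq_ofFn hg', flat_eq_ofFn hg, List.ofFn_inj'] at h
  cases h
  exact ⟨ι, hι, rfl⟩

lemma sum_flat (a : Fin n → ℕ) : (flat a).sum = ∑ i, a i := by
  rw [← List.sum_ofFn, flat]
  induction List.ofFn a with
  | nil => rfl
  | cons x t ih => by_cases hx : x = 0 <;> simp_all

lemma mem_wcFinset_of_flat_eq {a : Fin m → ℕ} {b : Fin n → ℕ} (h : flat b = flat a) :
    b ∈ wcFinset n (∑ i, a i) := by
  rw [← sum_flat a, ← h, sum_flat]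
  simp only [wcFinset, Fintype.mem_piFinset, Finset.mem_range, Nat.lt_succ_iff]
  exact fun i => Finset.single_le_sum (fun _ _ => Nat.zero_le _) (Finset.mem_univ i)

end Flat

section SlidePolynomial

variable {l n : ℕ} {ι : Fin l → Fin n} {g : Fin l → ℕ} {a b : Fin n → ℕ}

/-- The monomial `x^b` with exponent vector the weak composition `b`. -/
noncomputable def monom (b : Fin n → ℕ) : MvPolynomial (Fin n) ℤ :=
  MvPolynomial.monomial (Finsupp.equivFunOnFinite.symm b) 1

lemma monom_add (b c : Fin n → ℕ) : monom (b + c) = monom b * monom c := by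
  rw [monom, monom, monom, MvPolynomial.monomial_mul, one_mul]
  congr 2
  ext i
  simp

/-- The exponent vectors of the monomials of `𝔐_a`. -/
noncomputable def slideTerms (a : Fin n → ℕ) : Finset (Fin n → ℕ) :=
  (wcFinset n (∑ i, a i)).filter fun b => Dominates b a ∧ flat b = flat a

lemma slideM_eq_sum_slideTerms (a : Fin n → ℕ) : slideM a = ∑ b ∈ slideTerms a, monom b := rfl

lemma mem_slideTerms : b ∈ slideTerms a ↔ Dominates b a ∧ flat b = flat a := by
  rw [slideTerms, Finset.mem_filter, and_iff_right_iff_imp]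
  exact fun h => mem_wcFinset_of_flat_eq h.2

lemma slideTerms_spread (hι : StrictMono ι) (hg : ∀ k, 0 < g k) :
    slideTerms (spread ι g) =
      Finset.image (fun κ => spread κ g) {κ : Fin l → Fin n | StrictMono κ ∧ κ ≤ ι} := by
  ext d
  simp only [mem_slideTerms, flat_spread hι,
    flat_eq_flat_iff_exists_spread fun k => (hg k).ne', Finset.mem_image, Finset.mem_filter_univ]
  constructor
  · rintro ⟨hdom, κ, hκ, rfl⟩
    exact ⟨κ, ⟨hκ, (dominates_spread_iff hκ hι hg).1 hdom⟩, rfl⟩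
  · rintro ⟨κ, ⟨hκ, hle⟩, rfl⟩
    exact ⟨dominates_spread_of_le hle g, κ, hκ, rfl⟩

lemma slideM_spread (hι : StrictMono ι) (hg : ∀ k, 0 < g k) :
    slideM (spread ι g) = ∑ κ : Fin l → Fin n with StrictMono κ ∧ κ ≤ ι, monom (spread κ g) := by
  rw [slideM_eq_sum_slideTerms, slideTerms_spread hι hg, Finset.sum_image]
  intro κ hκ κ' hκ' (h : spread κ g = spread κ' g)
  simp only [Finset.coe_filter_univ, Set.mem_ofPred_eq] at hκ hκ'
  exact le_antisymm
    ((dominates_spread_iff hκ.1 hκ'.1 hg).1 fun _ => h ▸ le_rfl)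
    ((dominates_spread_iff hκ'.1 hκ.1 hg).1 fun _ => h ▸ le_rfl)

end SlidePolynomial

section Placements

variable {l n : ℕ} {ι ι' : Fin l → Fin n} {g : Fin l → ℕ} {a : Fin n → ℕ}

/-- The strictly increasing position maps along which inserting zeros into `g` gives a weak
composition dominating `a`. The maps admissible for a pair `(g, h)` form the intersection
`placements a g ∩ placements b h`. -/
noncomputable def placements (a : Fin n → ℕ) (g : Fin l → ℕ) : Finset (Fin l → Fin n) :=
  {ι | StrictMono ι ∧ Dominates (spread ι g) a}

lemma mem_placements : ι ∈ placements a g ↔ StrictMono ι ∧ Dominates (spread ι g) a := by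
  simp [placements]

lemma mem_placements_of_le (hι : StrictMono ι) (hle : ι ≤ ι') (hι' : ι' ∈ placements a g) :
    ι ∈ placements a g :=
  mem_placements.2 ⟨hι, (dominates_spread_of_le hle g).trans (mem_placements.1 hι').2⟩

lemma supClosed_placements (a : Fin n → ℕ) (g : Fin l → ℕ) :
    SupClosed (placements a g : Set (Fin l → Fin n)) := fun ι hι ι' hι' => by
  obtain ⟨hmono, hdom⟩ := mem_placements.1 hι
  obtain ⟨hmono', hdom'⟩ := mem_placements.1 hι'
  refine mem_placements.2 ⟨fun j k hjk => max_lt_max (hmono hjk) (hmono' hjk), fun i => ?_⟩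
  rw [psum_spread_sup hmono.monotone hmono'.monotone]
  exact le_min (hdom i) (hdom' i)

lemma supClosed_placements_inter (a b : Fin n → ℕ) (g h : Fin l → ℕ) :
    SupClosed (↑(placements a g ∩ placements b h) : Set (Fin l → Fin n)) := by
  rw [Finset.coe_inter]
  exact (supClosed_placements a g).inter (supClosed_placements b h)

lemma shiftComp_zero (hl : l ≤ n) (g : Fin l → ℕ) :
    shiftComp 0 n g = spread (Fin.castLE hl) g := by
  rw [spread_eq_extend (Fin.castLE_injective hl)]
  funext i
  by_cases hi : (i : ℕ) < l
  · obtain ⟨k, rfl⟩ : ∃ k, Fin.castLE hl k = i := ⟨⟨i, hi⟩, rfl⟩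
    rw [(Fin.castLE_injective hl).extend_apply]
    simp [shiftComp]
  · rw [Function.extend_apply' _ _ _ fun ⟨k, hk⟩ => hi (hk ▸ k.2)]
    simp [shiftComp, hi]

lemma castLE_mem_placements_iff (hl : l ≤ n) :
    Fin.castLE hl ∈ placements a g ↔ Dominates (shiftComp 0 n g) a := by
  rw [mem_placements, and_iff_right (Fin.strictMono_castLE hl), shiftComp_zero hl]

end Placements

section QuasiShuffle

variable {l n : ℕ} {g h : Fin l → ℕ} {a b c : Fin n → ℕ}

lemma inQSS_iff_placements_inter_nonempty : InQSS a b ⟨l, g, h⟩ ↔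
    (placements a g ∩ placements b h).Nonempty ∧ flat g = flat a ∧ flat h = flat b ∧
      ∀ k, 0 < g k + h k := by
  constructor
  · rintro ⟨hl, ha, hga, hb, hhb, hpos⟩
    exact ⟨⟨Fin.castLE hl, Finset.mem_inter.2 ⟨(castLE_mem_placements_iff hl).2 ha,
      (castLE_mem_placements_iff hl).2 hb⟩⟩, hga, hhb, hpos⟩
  · rintro ⟨⟨ι, hι⟩, hga, hhb, hpos⟩
    obtain ⟨hιa, hιb⟩ := Finset.mem_inter.1 hι
    have hmono : StrictMono ι := (mem_placements.1 hιa).1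
    have hl : l ≤ n := by simpa using Fintype.card_le_of_injective ι hmono.injective
    have hle := castLE_le_of_strictMono hl hmono
    have hcast := Fin.strictMono_castLE hl
    exact ⟨hl, (castLE_mem_placements_iff hl).1 (mem_placements_of_le hcast hle hιa), hga,
      (castLE_mem_placements_iff hl).1 (mem_placements_of_le hcast hle hιb), hhb, hpos⟩

lemma isBumpQ_iff_isGreatest (hpos : ∀ k, 0 < g k + h k) : IsBumpQ a b ⟨l, g, h⟩ c ↔
    ∃ ι : Fin l → Fin n, IsGreatest ↑(placements a g ∩ placements b h) ι ∧
      c = spread ι fun k => g k + h k := by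
  refine exists_congr fun ι => ?_
  simp only [IsGreatest, mem_upperBounds, Finset.mem_coe, Finset.mem_inter, mem_placements]
  constructor
  · rintro ⟨hι, rfl, ha, hb, hmin⟩
    exact ⟨⟨⟨⟨hι, ha⟩, hι, hb⟩, fun ι' ⟨⟨hι', ha'⟩, _, hb'⟩ =>
      (dominates_spread_iff hι' hι hpos).1 (hmin ι' hι' ha' hb')⟩, rfl⟩
  · rintro ⟨⟨⟨⟨hι, ha⟩, _, hb⟩, hmax⟩, rfl⟩
    exact ⟨hι, rfl, ha, hb, fun ι' hι' ha' hb' =>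
      dominates_spread_of_le (hmax ι' ⟨⟨hι', ha'⟩, hι', hb'⟩) _⟩

lemma existsUnique_isBumpQ {x : (l : ℕ) × (Fin l → ℕ) × (Fin l → ℕ)} (hx : InQSS a b x) :
    ∃! c, IsBumpQ a b x c := by
  obtain ⟨l, g, h⟩ := x
  obtain ⟨hne, -, -, hpos⟩ := inQSS_iff_placements_inter_nonempty.1 hx
  have hmax : IsGreatest ↑(placements a g ∩ placements b h) (Finset.sup' _ hne id) :=
    ⟨(supClosed_placements_inter a b g h).finsetSup'_mem hne fun _ hι => hι,
      fun _ hι => Finset.le_sup' id hι⟩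
  refine ⟨_, (isBumpQ_iff_isGreatest hpos).2 ⟨_, hmax, rfl⟩, fun c hc => ?_⟩
  obtain ⟨ι, hι, rfl⟩ := (isBumpQ_iff_isGreatest hpos).1 hc
  rw [hι.unique hmax]

lemma slideM_of_isBumpQ (hpos : ∀ k, 0 < g k + h k) (hc : IsBumpQ a b ⟨l, g, h⟩ c) :
    slideM c = ∑ ι ∈ placements a g ∩ placements b h, monom (spread ι fun k => g k + h k) := by
  obtain ⟨ι, ⟨hmem, hmax⟩, rfl⟩ := (isBumpQ_iff_isGreatest hpos).1 hc
  obtain ⟨ha, hb⟩ := Finset.mem_inter.1 hmem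
  rw [slideM_spread (mem_placements.1 ha).1 hpos]
  congr 1
  ext κ
  simp only [Finset.mem_filter_univ]
  exact ⟨fun ⟨hκ, hle⟩ => Finset.mem_inter.2
      ⟨mem_placements_of_le hκ hle ha, mem_placements_of_le hκ hle hb⟩,
    fun hκ => ⟨(mem_placements.1 (Finset.mem_inter.1 hκ).1).1, hmax hκ⟩⟩

/-- The quasi-shuffle set `QSS(a,b)`, as a type. -/
abbrev QuasiShuffle (a b : Fin n → ℕ) : Type :=
  {x : (l : ℕ) × (Fin l → ℕ) × (Fin l → ℕ) // InQSS a b x}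

lemma QuasiShuffle.pos (x : QuasiShuffle a b) (k : Fin x.1.1) : 0 < x.1.2.1 k + x.1.2.2 k :=
  (inQSS_iff_placements_inter_nonempty.1 x.2).2.2.2 k

/-- The position maps of insertions of zeros into a quasi-shuffle of `a` and `b` whose
decompositions dominate `a` and `b`. -/
noncomputable def QuasiShuffle.insertions (x : QuasiShuffle a b) : Finset (Fin x.1.1 → Fin n) :=
  placements a x.1.2.1 ∩ placements b x.1.2.2

instance (a b : Fin n → ℕ) : Finite (QuasiShuffle a b) := by
  refine Set.Finite.subset ((Finset.range (n + 1)).sigma fun l =>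
    wcFinset l (∑ i, a i) ×ˢ wcFinset l (∑ i, b i)).finite_toSet ?_
  rintro ⟨l, g, h⟩ ⟨hl, -, hg, -, hh, -⟩
  simp only [Finset.coe_sigma, Set.mem_sigma_iff, Finset.mem_coe, Finset.mem_range,
    Finset.mem_product]
  exact ⟨Nat.lt_succ_iff.2 hl, mem_wcFinset_of_flat_eq hg, mem_wcFinset_of_flat_eq hh⟩

noncomputable instance (a b : Fin n → ℕ) : Fintype (QuasiShuffle a b) := Fintype.ofFinite _

/-- The bump of a quasi-shuffle of `a` and `b`. -/
noncomputable def bump (x : QuasiShuffle a b) : Fin n → ℕ := (existsUnique_isBumpQ x.2).choose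

lemma isBumpQ_iff_bump_eq (x : QuasiShuffle a b) : IsBumpQ a b x c ↔ bump x = c :=
  have hx := (existsUnique_isBumpQ x.2).choose_spec
  ⟨fun hc => (hx.2 c hc).symm, fun hc => hc ▸ hx.1⟩

lemma qsMult_eq_card_bump_fiber (a b c : Fin n → ℕ) :
    qsMult a b c = Nat.card {x : QuasiShuffle a b // bump x = c} := by
  simp only [← isBumpQ_iff_bump_eq]
  exact Nat.card_congr (Equiv.subtypeSubtypeEquivSubtypeInter _ _).symm

lemma slideM_bump (x : QuasiShuffle a b) :
    slideM (bump x) = ∑ ι ∈ x.insertions, monom (spread ι fun k => x.1.2.1 k + x.1.2.2 k) :=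
  slideM_of_isBumpQ x.pos ((isBumpQ_iff_bump_eq x).2 rfl)

end QuasiShuffle

section Product

variable {n : ℕ} {a b c d : Fin n → ℕ}

lemma QuasiShuffle.spread_mem_slideTerms (x : QuasiShuffle a b) {ι : Fin x.1.1 → Fin n}
    (hι : ι ∈ x.insertions) :
    spread ι x.1.2.1 ∈ slideTerms a ∧ spread ι x.1.2.2 ∈ slideTerms b := by
  obtain ⟨ha, hb⟩ := Finset.mem_inter.1 hι
  obtain ⟨hmono, hdoma⟩ := mem_placements.1 ha
  obtain ⟨-, hflata, hflatb, -⟩ := inQSS_iff_placements_inter_nonempty.1 x.2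
  exact ⟨mem_slideTerms.2 ⟨hdoma, (flat_spread hmono _).trans hflata⟩,
    mem_slideTerms.2 ⟨(mem_placements.1 hb).2, (flat_spread hmono _).trans hflatb⟩⟩

lemma exists_quasiShuffle_spread_eq (hc : c ∈ slideTerms a) (hd : d ∈ slideTerms b) :
    ∃ x : QuasiShuffle a b, ∃ ι ∈ x.insertions, spread ι x.1.2.1 = c ∧ spread ι x.1.2.2 = d := by
  obtain ⟨l, ι, g, h, hι, hpos, rfl, rfl⟩ := exists_spread_pair_eq c d
  obtain ⟨hdoma, hflata⟩ := mem_slideTerms.1 hc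
  obtain ⟨hdomb, hflatb⟩ := mem_slideTerms.1 hd
  rw [flat_spread hι] at hflata hflatb
  have hmem : ι ∈ placements a g ∩ placements b h :=
    Finset.mem_inter.2 ⟨mem_placements.2 ⟨hι, hdoma⟩, mem_placements.2 ⟨hι, hdomb⟩⟩
  exact ⟨⟨⟨l, g, h⟩, inQSS_iff_placements_inter_nonempty.2 ⟨⟨ι, hmem⟩, hflata, hflatb, hpos⟩⟩,
    ι, hmem, rfl, rfl⟩

lemma QuasiShuffle.spread_inj {x y : QuasiShuffle a b} {ι : Fin x.1.1 → Fin n}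
    {κ : Fin y.1.1 → Fin n} (hι : ι ∈ x.insertions) (hκ : κ ∈ y.insertions)
    (ha : spread ι x.1.2.1 = spread κ y.1.2.1) (hb : spread ι x.1.2.2 = spread κ y.1.2.2) :
    (⟨x, ι⟩ : (x : QuasiShuffle a b) × (Fin x.1.1 → Fin n)) = ⟨y, κ⟩ := by
  have strictMono {z : QuasiShuffle a b} {ι : Fin z.1.1 → Fin n} (hι : ι ∈ z.insertions) :
      StrictMono ι := (mem_placements.1 (Finset.mem_inter.1 hι).1).1
  obtain ⟨hxy, hικ⟩ := Sigma.mk.inj_iff.1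
    (spread_pair_inj (strictMono hι) (strictMono hκ) x.pos y.pos ha hb)
  exact Sigma.ext (Subtype.ext hxy) hικ

lemma slideM_mul_slideM (a b : Fin n → ℕ) : slideM a * slideM b = ∑ x : QuasiShuffle a b,
    ∑ ι ∈ x.insertions, monom (spread ι fun k => x.1.2.1 k + x.1.2.2 k) := by
  rw [slideM_eq_sum_slideTerms, slideM_eq_sum_slideTerms, Finset.sum_mul_sum,
    ← Finset.sum_product', Finset.sum_sigma']
  symm
  refine Finset.sum_bij (fun p _ => (spread p.2 p.1.1.2.1, spread p.2 p.1.1.2.2)) ?_ ?_ ?_ ?_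
  · rintro ⟨x, ι⟩ hι
    exact Finset.mem_product.2 (x.spread_mem_slideTerms (Finset.mem_sigma.1 hι).2)
  · rintro ⟨x, ι⟩ hι ⟨y, κ⟩ hκ heq
    obtain ⟨ha, hb⟩ := Prod.mk.inj heq
    exact QuasiShuffle.spread_inj (Finset.mem_sigma.1 hι).2 (Finset.mem_sigma.1 hκ).2 ha hb
  · rintro ⟨c, d⟩ hcd
    obtain ⟨hc, hd⟩ := Finset.mem_product.1 hcd
    obtain ⟨x, ι, hι, rfl, rfl⟩ := exists_quasiShuffle_spread_eq hc hd
    exact ⟨⟨x, ι⟩, Finset.mem_sigma.2 ⟨Finset.mem_univ x, hι⟩, rfl⟩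
  · rintro ⟨x, ι⟩ -
    rw [spread_add, monom_add]

end Product

/-- the structure constants of the monomial slide polynomials are given by
the quasi-slide product: `𝔐_a · 𝔐_b = Σ_c [c ∣ a ⧻ b] 𝔐_c`. -/
theorem monomialSlide_mul (n : ℕ) (a b : Fin n → ℕ) :
    slideM a * slideM b = ∑ᶠ c : Fin n → ℕ, (qsMult a b c : ℤ) • slideM c := by
  calc slideM a * slideM b
      = ∑ x : QuasiShuffle a b, slideM (bump x) := by
        rw [slideM_mul_slideM]
        exact Finset.sum_congr rfl fun x _ => (slideM_bump x).symm
    _ = ∑ᶠ c, Nat.card {x : QuasiShuffle a b // bump x = c} • slideM c := by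
        rw [finsum_card_fiber_nsmul, finsum_eq_sum_of_fintype]
    _ = ∑ᶠ c, (qsMult a b c : ℤ) • slideM c := by
        simp only [qsMult_eq_card_bump_fiber, natCast_zsmul]

end SlidePaper
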